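/- Let n ≥ 2 and R a commutative ring with invertible element q^{1/n}, q := (q^{1/n})^n. In the common underlying R-module of O_q(M_n) and B_q(M_n), for every N ≥ 1 and all indices k₁, …, k_{N+1}, l₁, …, l_{N+1} ∈ {1, …, n} the following identity holds: (x^{k₁}_{l₁} x^{k₂}_{l₂} ⋯ x^{k_N}_{l_N}) x^{k_{N+1}}_{l_{N+1}} = Σ (Π_{i=1}^{N} 𝓡⁻¹(x^{k_{N−i+1}}_{α_{N−i+1}}, x^{γ_i}_{γ_{i+1}}) 𝓡(x^{β_i}_{l_i}, x^{δ_i}_{δ_{i+1}})) · (x^{α₁}_{β₁} x^{α₂}_{β₂} ⋯ x^{α_N}_{β_N}) ⬝ x^{δ_{N+1}}_{l_{N+1}}, where all products of generators x are taken with the original product of O_q(M_n), ⬝ is the covariantized product, and the sum runs over all indices α_i, β_i ∈ {1, …, n} (1 ≤ i ≤ N) and γ_i, δ_i ∈ {1, …, n} (1 ≤ i ≤ N + 1) subject to γ₁ = k_{N+1} and γ_{N+1} = δ₁. -/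

import Mathlib

open scoped TensorProduct BigOperators

noncomputable section

universe u

/-- Integer power `q^m` of an invertible element `qq` of `R`, as an element of `R`. -/
def qzpow {R : Type u} [CommRing R] (qq : Rˣ) (m : ℤ) : R := ((qq ^ m : Rˣ) : R)

/-- The defining relations of the `q`-matrix bialgebra `O_q(M_n)` for a family
`y i j` (the image of the generator `x^i_j`; the first index is the upper one). -/
def OqMnRels {R : Type u} [CommRing R] {B : Type u} [Ring B] [Algebra R B]
    (n : ℕ) (qq : Rˣ) (y : Fin n → Fin n → B) : Prop :=
  (∀ i j k : Fin n, j < k → y i k * y i j = (qq : R) • (y i j * y i k)) ∧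
  (∀ i j k : Fin n, j < k → y k i * y j i = (qq : R) • (y j i * y k i)) ∧
  (∀ i j k l : Fin n, i < j → k < l → y i l * y j k = y j k * y i l) ∧
  (∀ i j k l : Fin n, i < j → k < l →
    y j l * y i k - y i k * y j l = ((qq : R) - ((qq⁻¹ : Rˣ) : R)) • (y i l * y j k))

/-- `ρ` is a dual quasitriangular structure on the bialgebra `A`.  All conditions
involving the Sweedler components of the comultiplication are expressed by
quantifying over finite representations of `comul`. -/
def IsDQT {R : Type u} [CommRing R] {A : Type u} [Ring A] [Bialgebra R A]
    (ρ : A →ₗ[R] A →ₗ[R] R) : Prop :=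
  (∀ (a b c : A) (s : Finset ℕ) (c1 c2 : ℕ → A),
      Coalgebra.comul (R := R) c = ∑ i ∈ s, c1 i ⊗ₜ[R] c2 i →
      ρ (a * b) c = ∑ i ∈ s, ρ a (c1 i) * ρ b (c2 i)) ∧
  (∀ (a b c : A) (s : Finset ℕ) (a1 a2 : ℕ → A),
      Coalgebra.comul (R := R) a = ∑ i ∈ s, a1 i ⊗ₜ[R] a2 i →
      ρ a (b * c) = ∑ i ∈ s, ρ (a1 i) c * ρ (a2 i) b) ∧
  (∀ a : A, ρ a 1 = Coalgebra.counit (R := R) a) ∧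
  (∀ a : A, ρ 1 a = Coalgebra.counit (R := R) a) ∧
  (∀ (a b : A) (s t : Finset ℕ) (a1 a2 b1 b2 : ℕ → A),
      Coalgebra.comul (R := R) a = ∑ i ∈ s, a1 i ⊗ₜ[R] a2 i →
      Coalgebra.comul (R := R) b = ∑ j ∈ t, b1 j ⊗ₜ[R] b2 j →
      ∑ i ∈ s, ∑ j ∈ t, ρ (a2 i) (b2 j) • (b1 j * a1 i) =
        ∑ i ∈ s, ∑ j ∈ t, ρ (a1 i) (b1 j) • (a2 i * b2 j))

/-- `ρt` is the convolution inverse of `ρ` in `Hom(A ⊗ A^cop, R)`. -/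
def IsCopConvInv {R : Type u} [CommRing R] {A : Type u} [Ring A] [Bialgebra R A]
    (ρ ρt : A →ₗ[R] A →ₗ[R] R) : Prop :=
  ∀ (a b : A) (s t : Finset ℕ) (a1 a2 b1 b2 : ℕ → A),
    Coalgebra.comul (R := R) a = ∑ i ∈ s, a1 i ⊗ₜ[R] a2 i →
    Coalgebra.comul (R := R) b = ∑ j ∈ t, b1 j ⊗ₜ[R] b2 j →
    (∑ i ∈ s, ∑ j ∈ t, ρt (a1 i) (b2 j) * ρ (a2 i) (b1 j)
        = Coalgebra.counit (R := R) a * Coalgebra.counit (R := R) b) ∧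
    (∑ i ∈ s, ∑ j ∈ t, ρ (a1 i) (b2 j) * ρt (a2 i) (b1 j)
        = Coalgebra.counit (R := R) a * Coalgebra.counit (R := R) b)

/-- The twofold comultiplication `a ↦ a₍₁₎ ⊗ (a₍₂₎ ⊗ a₍₃₎)`. -/
def comul2 {R : Type u} [CommRing R] {A : Type u} [Ring A] [Bialgebra R A] :
    A →ₗ[R] A ⊗[R] (A ⊗[R] A) :=
  (TensorProduct.map LinearMap.id (Coalgebra.comul (R := R))).comp (Coalgebra.comul (R := R))

/-- `cmul` is the covariantized (reflection equation) product
`a ⬝ b = a₍₂₎ b₍₃₎ 𝓡̃(a₍₃₎, b₍₁₎) 𝓡(a₍₁₎, b₍₂₎)` built from `ρ` and its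
convolution inverse `ρt` in `Hom(A ⊗ A^cop, R)`, expressed via finite
representations of the iterated comultiplication. -/
def CovChar {R : Type u} [CommRing R] {A : Type u} [Ring A] [Bialgebra R A]
    (ρ ρt : A →ₗ[R] A →ₗ[R] R) (cmul : A → A → A) : Prop :=
  ∀ (a b : A) (s t : Finset ℕ) (a1 a2 a3 b1 b2 b3 : ℕ → A),
    comul2 (R := R) a = ∑ i ∈ s, a1 i ⊗ₜ[R] (a2 i ⊗ₜ[R] a3 i) →
    comul2 (R := R) b = ∑ j ∈ t, b1 j ⊗ₜ[R] (b2 j ⊗ₜ[R] b3 j) →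
    cmul a b = ∑ i ∈ s, ∑ j ∈ t, (ρt (a3 i) (b1 j) * ρ (a1 i) (b2 j)) • (a2 i * b3 j)

/-- The value `𝓡(x^i_j, x^k_l)` of the standard dual quasitriangular structure of
`O_q(M_n)`, where `qr = q^{1/n}` is the chosen `n`-th root of `q = qr^n`:
`𝓡(x^i_j, x^k_l) = q^{−1/n} (δ^i_j δ^k_l q^{δ^j_l} + (q − q^{−1}) δ_{j>l} δ^i_l δ^k_j)`. -/
def RmatVal {R : Type u} [CommRing R] (n : ℕ) (qr : Rˣ) (i j k l : Fin n) : R :=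
  ((qr⁻¹ : Rˣ) : R) *
    ((if i = j then 1 else 0) * (if k = l then 1 else 0) *
        (if j = l then ((qr ^ n : Rˣ) : R) else 1)
      + (((qr ^ n : Rˣ) : R) - (((qr ^ n)⁻¹ : Rˣ) : R)) * (if l < j then 1 else 0) *
          (if i = l then 1 else 0) * (if k = j then 1 else 0))

/-- Product of a nonempty list under a binary operation, bracketed to the right. -/
def cchain {A : Type u} (cmul : A → A → A) : A → List A → A
  | a, [] => a
  | a, b :: l => cmul a (cchain cmul b l)

/-- Product of a list under the binary operation `cmul`, equal to `one` on the empty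
list (and not otherwise using `one`). -/
def cListProd {A : Type u} (cmul : A → A → A) (one : A) : List A → A
  | [] => one
  | a :: l => cchain cmul a l

/-- `N`-th power with respect to the binary operation `cmul`. -/
def cpow {A : Type u} (cmul : A → A → A) (one : A) (a : A) (N : ℕ) : A :=
  cListProd cmul one (List.replicate N a)

/-- `ρinv` is the convolution inverse of `ρ` in `Hom(A ⊗ A, R)`. -/
def IsConvInv {R : Type u} [CommRing R] {A : Type u} [Ring A] [Bialgebra R A]
    (ρ ρinv : A →ₗ[R] A →ₗ[R] R) : Prop :=
  ∀ (a b : A) (s t : Finset ℕ) (a1 a2 b1 b2 : ℕ → A),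
    Coalgebra.comul (R := R) a = ∑ i ∈ s, a1 i ⊗ₜ[R] a2 i →
    Coalgebra.comul (R := R) b = ∑ j ∈ t, b1 j ⊗ₜ[R] b2 j →
    (∑ i ∈ s, ∑ j ∈ t, ρinv (a1 i) (b1 j) * ρ (a2 i) (b2 j)
        = Coalgebra.counit (R := R) a * Coalgebra.counit (R := R) b) ∧
    (∑ i ∈ s, ∑ j ∈ t, ρ (a1 i) (b1 j) * ρinv (a2 i) (b2 j)
        = Coalgebra.counit (R := R) a * Coalgebra.counit (R := R) b)

section SweedlerSums

variable {R : Type u} [CommRing R] {A : Type u} [Ring A] [Bialgebra R A]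
  {ι κ : Type*} [Fintype ι] [Fintype κ]

/-- A finite type enumerated by natural numbers. -/
def natEmbedding (ι : Type*) [Fintype ι] : ι ↪ ℕ :=
  (Fintype.equivFin ι).toEmbedding.trans Fin.valEmbedding

theorem sum_map_natEmbedding [Nonempty ι] {M : Type*} [AddCommMonoid M] (F : ι → M) :
    ∑ i ∈ Finset.univ.map (natEmbedding ι), F (Function.invFun (natEmbedding ι) i) =
      ∑ i, F i := by
  simp [Finset.sum_map, Function.leftInverse_invFun (natEmbedding ι).injective _]

theorem IsDQT.mul_left [Nonempty ι] {ρ : A →ₗ[R] A →ₗ[R] R} (hρ : IsDQT ρ) (a b : A) {c : A}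
    {c1 c2 : ι → A} (hc : Coalgebra.comul (R := R) c = ∑ i, c1 i ⊗ₜ[R] c2 i) :
    ρ (a * b) c = ∑ i, ρ a (c1 i) * ρ b (c2 i) := by
  rw [← sum_map_natEmbedding] at hc ⊢
  exact hρ.1 a b c _ (fun i => c1 (Function.invFun _ i)) (fun i => c2 (Function.invFun _ i)) hc

theorem IsConvInv.inv_mul [Nonempty ι] [Nonempty κ]
    {ρ ρinv : A →ₗ[R] A →ₗ[R] R} (h : IsConvInv ρ ρinv) {a b : A}
    {a1 a2 : ι → A} {b1 b2 : κ → A}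
    (ha : Coalgebra.comul (R := R) a = ∑ i, a1 i ⊗ₜ[R] a2 i)
    (hb : Coalgebra.comul (R := R) b = ∑ j, b1 j ⊗ₜ[R] b2 j) :
    ∑ i, ∑ j, ρinv (a1 i) (b1 j) * ρ (a2 i) (b2 j) =
      Coalgebra.counit (R := R) a * Coalgebra.counit (R := R) b := by
  simp only [← sum_map_natEmbedding (ι := ι), ← sum_map_natEmbedding (ι := κ)] at ha hb ⊢
  exact (h a b _ _ (fun i => a1 (Function.invFun _ i)) (fun i => a2 (Function.invFun _ i))
    (fun i => b1 (Function.invFun _ i)) (fun i => b2 (Function.invFun _ i)) ha hb).1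

theorem IsCopConvInv.inv_mul [Nonempty ι] [Nonempty κ]
    {ρ ρt : A →ₗ[R] A →ₗ[R] R} (h : IsCopConvInv ρ ρt) {a b : A}
    {a1 a2 : ι → A} {b1 b2 : κ → A}
    (ha : Coalgebra.comul (R := R) a = ∑ i, a1 i ⊗ₜ[R] a2 i)
    (hb : Coalgebra.comul (R := R) b = ∑ j, b1 j ⊗ₜ[R] b2 j) :
    ∑ i, ∑ j, ρt (a1 i) (b2 j) * ρ (a2 i) (b1 j) =
      Coalgebra.counit (R := R) a * Coalgebra.counit (R := R) b := by
  simp only [← sum_map_natEmbedding (ι := ι), ← sum_map_natEmbedding (ι := κ)] at ha hb ⊢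
  exact (h a b _ _ (fun i => a1 (Function.invFun _ i)) (fun i => a2 (Function.invFun _ i))
    (fun i => b1 (Function.invFun _ i)) (fun i => b2 (Function.invFun _ i)) ha hb).1

theorem CovChar.eq_sum [Nonempty ι] [Nonempty κ]
    {ρ ρt : A →ₗ[R] A →ₗ[R] R} {cmul : A → A → A} (h : CovChar ρ ρt cmul)
    {a b : A} {a1 a2 a3 : ι → A} {b1 b2 b3 : κ → A}
    (ha : comul2 (R := R) a = ∑ i, a1 i ⊗ₜ[R] (a2 i ⊗ₜ[R] a3 i))
    (hb : comul2 (R := R) b = ∑ j, b1 j ⊗ₜ[R] (b2 j ⊗ₜ[R] b3 j)) :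
    cmul a b = ∑ i, ∑ j, (ρt (a3 i) (b1 j) * ρ (a1 i) (b2 j)) • (a2 i * b3 j) := by
  simp only [← sum_map_natEmbedding (ι := ι), ← sum_map_natEmbedding (ι := κ)] at ha hb ⊢
  exact h a b _ _ (fun i => a1 (Function.invFun _ i)) (fun i => a2 (Function.invFun _ i))
    (fun i => a3 (Function.invFun _ i)) (fun i => b1 (Function.invFun _ i))
    (fun i => b2 (Function.invFun _ i)) (fun i => b3 (Function.invFun _ i)) ha hb

/-- The twofold comultiplication of a matrix coefficient. -/
theorem comul2_eq_sum {y : ι → ι → A}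
    (hy : ∀ i j, Coalgebra.comul (R := R) (y i j) = ∑ k, y i k ⊗ₜ[R] y k j) (i j : ι) :
    comul2 (R := R) (y i j) =
      ∑ p : ι × ι, y i p.1 ⊗ₜ[R] (y p.1 p.2 ⊗ₜ[R] y p.2 j) := by
  simp [comul2, hy, TensorProduct.tmul_sum, Fintype.sum_prod_type]

end SweedlerSums

section PathSums

theorem fin_fun_eq_iff {ι : Type*} {N : ℕ} {K L : Fin (N + 1) → ι} :
    K = L ↔ K 0 = L 0 ∧ Fin.tail K = Fin.tail L := by
  simp [funext_iff, Fin.forall_fin_succ, Fin.tail]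

/-- Exchange of a triple sum and a double sum. -/
theorem sum_comm_three_two {M : Type*} [AddCommMonoid M] {I J K S T : Type*} [Fintype I]
    [Fintype J] [Fintype K] [Fintype S] [Fintype T] (F : I → J → K → S → T → M) :
    ∑ i, ∑ j, ∑ k, ∑ s, ∑ t, F i j k s t = ∑ s, ∑ t, ∑ i, ∑ j, ∑ k, F i j k s t := by
  simp only [← Fintype.sum_prod_type']
  exact Fintype.sum_equiv
    ⟨fun p => (p.2.2.2.1, p.2.2.2.2, p.1, p.2.1, p.2.2.1),
      fun p => (p.2.2.1, p.2.2.2.1, p.2.2.2.2, p.1, p.2.1), fun _ => rfl, fun _ => rfl⟩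
    _ _ fun _ => rfl

variable {R : Type*} [CommRing R] {ι : Type*} [Fintype ι]

theorem sum_fin_cons {M : Type*} [AddCommMonoid M] {N : ℕ} (F : (Fin (N + 1) → ι) → M) :
    ∑ f, F f = ∑ a, ∑ g : Fin N → ι, F (Fin.cons a g) := by
  rw [← Fintype.sum_prod_type']
  exact (Fintype.sum_equiv (Fin.consEquiv fun _ => ι) _ _ fun _ => rfl).symm

/-- Entries of an ordered matrix product, tested against a function of the column, as sums
over paths. -/
theorem sum_path_eq_sum_list_prod [DecidableEq ι] {M : Type*} [AddCommGroup M] [Module R M]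
    {N : ℕ} (m : Fin N → Matrix ι ι R) (a : ι) (v : ι → M) :
    ∑ γ : Fin (N + 1) → ι, (if γ 0 = a then
        (∏ i, m i (γ i.castSucc) (γ i.succ)) • v (γ (Fin.last N)) else 0) =
      ∑ b, (List.ofFn m).prod a b • v b := by
  induction N generalizing a with
  | zero =>
    rw [sum_fin_cons]
    simp [Matrix.one_apply, Fin.last_zero]
  | succ N ih =>
    rw [sum_fin_cons]
    have key (c : ι) := ih (fun i => m i.succ) c
    simp only [List.ofFn_succ, List.prod_cons, Matrix.mul_apply, Finset.sum_smul, mul_smul]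
    conv_rhs =>
      rw [Finset.sum_comm]
      simp only [← Finset.smul_sum, ← key]
      simp only [Finset.smul_sum]
      rw [Finset.sum_comm]
    rw [Finset.sum_comm]
    simp [Fin.prod_univ_succ, mul_smul, ← Fin.succ_last]

end PathSums

section Words

variable {R : Type u} [CommRing R] {A : Type u} [Ring A] [Bialgebra R A] {n : ℕ}
  {x : Fin n → Fin n → A}

/-- The product `x^{K₁}_{L₁} ⋯ x^{K_N}_{L_N}`. -/
def genWord (x : Fin n → Fin n → A) {N : ℕ} (K L : Fin N → Fin n) : A :=
  ((List.finRange N).map fun m => x (K m) (L m)).prod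

theorem genWord_zero (K L : Fin 0 → Fin n) : genWord x K L = 1 := by
  simp [genWord]

theorem genWord_succ {N : ℕ} (K L : Fin (N + 1) → Fin n) :
    genWord x K L = x (K 0) (L 0) * genWord x (Fin.tail K) (Fin.tail L) := by
  simp [genWord, List.finRange_succ, Function.comp_def, Fin.tail]

theorem genWord_succ_last {N : ℕ} (K L : Fin (N + 1) → Fin n) :
    genWord x K L =
      genWord x (Fin.init K) (Fin.init L) * x (K (Fin.last N)) (L (Fin.last N)) := by
  simp [genWord, List.finRange_succ_last, Function.comp_def, Fin.init]

theorem comul_genWord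
    (hΔ : ∀ i j, Coalgebra.comul (R := R) (x i j) = ∑ k, x i k ⊗ₜ[R] x k j)
    {N : ℕ} (K L : Fin N → Fin n) :
    Coalgebra.comul (R := R) (genWord x K L) =
      ∑ M : Fin N → Fin n, genWord x K M ⊗ₜ[R] genWord x M L := by
  induction N with
  | zero => simp [genWord_zero, Algebra.TensorProduct.one_def]
  | succ N ih =>
    simp [genWord_succ, sum_fin_cons, hΔ, ih, Finset.sum_mul_sum]

theorem counit_genWord
    (hε : ∀ i j, Coalgebra.counit (R := R) (x i j) = if i = j then (1 : R) else 0)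
    {N : ℕ} (K L : Fin N → Fin n) :
    Coalgebra.counit (R := R) (genWord x K L) = if K = L then (1 : R) else 0 := by
  induction N with
  | zero => simp [genWord_zero, Subsingleton.elim K L]
  | succ N ih =>
    simp only [genWord_succ, Bialgebra.counit_mul, hε, ih, fin_fun_eq_iff (K := K), ite_and,
      ite_mul, one_mul, zero_mul]

/-- The matrix `(σ(a, x^i_j))_{i,j}` of a bilinear form `σ`. -/
def formMatrix (σ : A →ₗ[R] A →ₗ[R] R) (x : Fin n → Fin n → A) (a : A) :
    Matrix (Fin n) (Fin n) R :=
  Matrix.of fun i j => σ a (x i j)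

theorem formMatrix_genWord [Nonempty (Fin n)]
    (hΔ : ∀ i j, Coalgebra.comul (R := R) (x i j) = ∑ k, x i k ⊗ₜ[R] x k j)
    (hε : ∀ i j, Coalgebra.counit (R := R) (x i j) = if i = j then (1 : R) else 0)
    {ρ : A →ₗ[R] A →ₗ[R] R} (hρ : IsDQT ρ) {N : ℕ} (K L : Fin N → Fin n) :
    formMatrix ρ x (genWord x K L) =
      (List.ofFn fun i => formMatrix ρ x (x (K i) (L i))).prod := by
  induction N with
  | zero =>
    ext i j
    simp [formMatrix, genWord_zero, hρ.2.2.2.1, hε, Matrix.one_apply]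
  | succ N ih =>
    simp only [List.ofFn_succ, List.prod_cons, genWord_succ]
    rw [show (List.ofFn fun i : Fin N => formMatrix ρ x (x (K i.succ) (L i.succ))).prod = _ from
      (ih (Fin.tail K) (Fin.tail L)).symm]
    ext i j
    simp [formMatrix, Matrix.mul_apply, hρ.mul_left _ _ (hΔ i j)]

theorem sum_formMatrix_inv_mul [Nonempty (Fin n)]
    (hΔ : ∀ i j, Coalgebra.comul (R := R) (x i j) = ∑ k, x i k ⊗ₜ[R] x k j)
    (hε : ∀ i j, Coalgebra.counit (R := R) (x i j) = if i = j then (1 : R) else 0)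
    {ρ ρinv : A →ₗ[R] A →ₗ[R] R} (h : IsConvInv ρ ρinv) (a c : Fin n) :
    ∑ b, formMatrix ρinv x (x a b) * formMatrix ρ x (x b c) = if a = c then 1 else 0 := by
  ext i j
  have := h.inv_mul (hΔ a c) (hΔ i j)
  rw [hε, hε] at this
  simp only [Matrix.sum_apply, Matrix.mul_apply, formMatrix, Matrix.of_apply, this]
  split_ifs <;> simp_all [Matrix.one_apply]

theorem sum_list_prod_formMatrix_inv_mul [Nonempty (Fin n)]
    (hΔ : ∀ i j, Coalgebra.comul (R := R) (x i j) = ∑ k, x i k ⊗ₜ[R] x k j)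
    (hε : ∀ i j, Coalgebra.counit (R := R) (x i j) = if i = j then (1 : R) else 0)
    {ρ ρinv : A →ₗ[R] A →ₗ[R] R} (h : IsConvInv ρ ρinv) {N : ℕ} (K L : Fin N → Fin n) :
    ∑ M : Fin N → Fin n,
      (List.ofFn fun i => formMatrix ρinv x (x (K i.rev) (M i.rev))).prod *
        (List.ofFn fun i => formMatrix ρ x (x (M i) (L i))).prod = if K = L then 1 else 0 := by
  induction N with
  | zero => simp [Subsingleton.elim K L]
  | succ N ih =>
    rw [sum_fin_cons, Finset.sum_comm]
    have key (M : Fin N → Fin n) (b : Fin n) :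
        (List.ofFn fun i => formMatrix ρinv x
            (x (K i.rev) ((Fin.cons b M : Fin (N + 1) → Fin n) i.rev))).prod *
          (List.ofFn fun i => formMatrix ρ x
            (x ((Fin.cons b M : Fin (N + 1) → Fin n) i) (L i))).prod =
        (List.ofFn fun i => formMatrix ρinv x (x (Fin.tail K i.rev) (M i.rev))).prod *
          (formMatrix ρinv x (x (K 0) b) * formMatrix ρ x (x b (L 0))) *
          (List.ofFn fun i => formMatrix ρ x (x (M i) (Fin.tail L i))).prod := by
      rw [List.ofFn_succ', List.ofFn_succ]
      simp [Fin.rev_castSucc, Fin.tail, mul_assoc]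
    simp only [key, ← Finset.sum_mul, ← Finset.mul_sum, sum_formMatrix_inv_mul hΔ hε h]
    by_cases h0 : K 0 = L 0
    · simpa [h0, fin_fun_eq_iff (K := K)] using ih (Fin.tail K) (Fin.tail L)
    · simp [h0, fin_fun_eq_iff (K := K)]

theorem sum_formMatrix_mul_cop_inv [Nonempty (Fin n)]
    (hΔ : ∀ i j, Coalgebra.comul (R := R) (x i j) = ∑ k, x i k ⊗ₜ[R] x k j)
    (hε : ∀ i j, Coalgebra.counit (R := R) (x i j) = if i = j then (1 : R) else 0)
    {ρ ρt : A →ₗ[R] A →ₗ[R] R} (h : IsCopConvInv ρ ρt) {N : ℕ} (K L : Fin N → Fin n) :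
    ∑ M : Fin N → Fin n,
      formMatrix ρ x (genWord x M L) * formMatrix ρt x (genWord x K M) =
        if K = L then 1 else 0 := by
  ext i j
  have := h.inv_mul (comul_genWord hΔ K L) (hΔ i j)
  rw [counit_genWord hε, hε] at this
  simp only [Matrix.sum_apply, Matrix.mul_apply, formMatrix, Matrix.of_apply,
    mul_comm (ρ _ _), this]
  split_ifs <;> simp_all [Matrix.one_apply]

theorem cmul_genWord [Nonempty (Fin n)]
    (hΔ : ∀ i j, Coalgebra.comul (R := R) (x i j) = ∑ k, x i k ⊗ₜ[R] x k j)
    {ρ ρt : A →ₗ[R] A →ₗ[R] R} {cmul : A → A → A} (h : CovChar ρ ρt cmul)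
    {N : ℕ} (K L : Fin N → Fin n) (i j : Fin n) :
    cmul (genWord x K L) (x i j) =
      ∑ S : Fin N → Fin n, ∑ T : Fin N → Fin n, ∑ f,
        (formMatrix ρt x (genWord x T L) * formMatrix ρ x (genWord x K S)) i f •
          (genWord x S T * x f j) := by
  rw [h.eq_sum (comul2_eq_sum (comul_genWord hΔ) K L) (comul2_eq_sum hΔ i j)]
  simp only [Fintype.sum_prod_type, Matrix.mul_apply, formMatrix, Matrix.of_apply,
    Finset.sum_smul]
  refine Finset.sum_congr rfl fun S _ => Finset.sum_congr rfl fun T _ => ?_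
  exact Finset.sum_comm

/-- Products of words with a generator in terms of the covariantized product. -/
theorem genWord_mul_eq_sum_cmul [Nonempty (Fin n)]
    (hΔ : ∀ i j, Coalgebra.comul (R := R) (x i j) = ∑ k, x i k ⊗ₜ[R] x k j)
    (hε : ∀ i j, Coalgebra.counit (R := R) (x i j) = if i = j then (1 : R) else 0)
    {ρ ρt ρinv : A →ₗ[R] A →ₗ[R] R} (hρ : IsDQT ρ) (hρt : IsCopConvInv ρ ρt)
    (hρinv : IsConvInv ρ ρinv) {cmul : A → A → A} (hcmul : CovChar ρ ρt cmul)
    {N : ℕ} (K L : Fin N → Fin n) (i j : Fin n) :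
    genWord x K L * x i j =
      ∑ α : Fin N → Fin n, ∑ β : Fin N → Fin n, ∑ d,
        ((List.ofFn fun i => formMatrix ρinv x (x (K i.rev) (α i.rev))).prod *
          (List.ofFn fun i => formMatrix ρ x (x (β i) (L i))).prod) i d •
          cmul (genWord x α β) (x d j) := by
  set Q := fun α : Fin N → Fin n =>
    (List.ofFn fun i => formMatrix ρinv x (x (K i.rev) (α i.rev))).prod
  set P := fun α β : Fin N → Fin n => formMatrix ρ x (genWord x α β) with hP
  set T := fun α β : Fin N → Fin n => formMatrix ρt x (genWord x α β)
  have hQP (S : Fin N → Fin n) : ∑ α, Q α * P α S = if K = S then 1 else 0 := by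
    simpa only [hP, formMatrix_genWord hΔ hε hρ] using
      sum_list_prod_formMatrix_inv_mul hΔ hε hρinv K S
  have hPT (B : Fin N → Fin n) : ∑ β, P β L * T B β = if B = L then 1 else 0 :=
    sum_formMatrix_mul_cop_inv hΔ hε hρt B L
  have hcm (α β : Fin N → Fin n) (d : Fin n) : cmul (genWord x α β) (x d j) =
      ∑ S, ∑ B, ∑ f, (T B β * P α S) d f • (genWord x S B * x f j) :=
    cmul_genWord hΔ hcmul α β d j
  have hsum (α β : Fin N → Fin n) :
      ∑ d, (Q α * P β L) i d • cmul (genWord x α β) (x d j) =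
        ∑ S, ∑ B, ∑ f, (Q α * (P β L * T B β) * P α S) i f • (genWord x S B * x f j) := by
    simp only [hcm, Finset.smul_sum, smul_smul]
    rw [Finset.sum_comm]
    refine Finset.sum_congr rfl fun S _ => ?_
    rw [Finset.sum_comm]
    refine Finset.sum_congr rfl fun B _ => ?_
    rw [Finset.sum_comm]
    refine Finset.sum_congr rfl fun f _ => ?_
    rw [← Finset.sum_smul, ← Matrix.mul_apply]
    simp only [mul_assoc]
  have hall (S B : Fin N → Fin n) : ∑ α, ∑ β, Q α * (P β L * T B β) * P α S =
      if K = S ∧ B = L then 1 else 0 := by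
    simp only [← Finset.sum_mul, ← Finset.mul_sum, hPT]
    by_cases hB : B = L <;> simp [hB, hQP]
  simp only [← formMatrix_genWord hΔ hε hρ]
  change _ = ∑ α, ∑ β, ∑ d, (Q α * P β L) i d • cmul (genWord x α β) (x d j)
  simp only [hsum]
  calc genWord x K L * x i j
      = ∑ S, ∑ B, ∑ f, (∑ α, ∑ β, Q α * (P β L * T B β) * P α S) i f •
          (genWord x S B * x f j) := by
        simp only [hall, ite_and]
        rw [Finset.sum_eq_single K (by intro S _ hS; simp [hS.symm]) (by simp),
          Finset.sum_eq_single L (by intro S _ hS; simp [hS]) (by simp)]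
        simp [Matrix.one_apply]
    _ = _ := by
        simp only [Matrix.sum_apply, Finset.sum_smul]
        exact sum_comm_three_two _

end Words

/-- The braid/twisting formula expressing an `(N+1)`-fold product of generators of
`O_q(M_n)` through the covariantized product:
`x^{k₁}_{l₁} ⋯ x^{k_N}_{l_N} x^{k_{N+1}}_{l_{N+1}}
  = ∑ (∏_{i=1}^{N} 𝓡⁻¹(x^{k_{N−i+1}}_{α_{N−i+1}}, x^{γ_i}_{γ_{i+1}}) 𝓡(x^{β_i}_{l_i}, x^{δ_i}_{δ_{i+1}}))
      (x^{α₁}_{β₁} ⋯ x^{α_N}_{β_N}) ⬝ x^{δ_{N+1}}_{l_{N+1}}`,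
summed over all `α, β : {1,…,N} → {1,…,n}` and `γ, δ : {1,…,N+1} → {1,…,n}` with
`γ₁ = k_{N+1}` and `γ_{N+1} = δ₁`.  (All indices are recorded `0`-indexed.) -/
theorem braid_formula
    {R : Type u} [CommRing R] (n : ℕ) (hn : 2 ≤ n) (qr : Rˣ)
    {A : Type u} [Ring A] [Bialgebra R A] (x : Fin n → Fin n → A)
    (hx : OqMnRels n (qr ^ n) x)
    (hxuniv : ∀ (B : Type u) [Ring B] [Algebra R B] (y : Fin n → Fin n → B),
      OqMnRels n (qr ^ n) y → ∃! f : A →ₐ[R] B, ∀ i j, f (x i j) = y i j)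
    (hΔ : ∀ i j, Coalgebra.comul (R := R) (x i j) = ∑ k, x i k ⊗ₜ[R] x k j)
    (hε : ∀ i j, Coalgebra.counit (R := R) (x i j) = if i = j then (1 : R) else 0)
    (ρ : A →ₗ[R] A →ₗ[R] R) (hρ : IsDQT ρ)
    (hρx : ∀ i j k l, ρ (x i j) (x k l) = RmatVal n qr i j k l)
    (ρt : A →ₗ[R] A →ₗ[R] R) (hρt : IsCopConvInv ρ ρt)
    (cmul : A → A → A) (hcmul : CovChar ρ ρt cmul)
    (ρinv : A →ₗ[R] A →ₗ[R] R) (hρinv : IsConvInv ρ ρinv)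
    (N : ℕ) (hN : 1 ≤ N) (k l : Fin (N + 1) → Fin n) :
    ((List.finRange (N + 1)).map (fun m => x (k m) (l m))).prod =
      ∑ α : Fin N → Fin n, ∑ β : Fin N → Fin n,
        ∑ γ : Fin (N + 1) → Fin n, ∑ δ : Fin (N + 1) → Fin n,
          if γ 0 = k (Fin.last N) ∧ γ (Fin.last N) = δ 0 then
            (∏ i : Fin N,
                (ρinv (x (k i.rev.castSucc) (α i.rev)) (x (γ i.castSucc) (γ i.succ)) *
                  ρ (x (β i) (l i.castSucc)) (x (δ i.castSucc) (δ i.succ)))) •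
              cmul (((List.finRange N).map (fun m => x (α m) (β m))).prod)
                (x (δ (Fin.last N)) (l (Fin.last N)))
          else 0 := by
  have : Nonempty (Fin n) := ⟨⟨0, by omega⟩⟩
  change genWord x k l = _
  rw [genWord_succ_last, genWord_mul_eq_sum_cmul hΔ hε hρ hρt hρinv hcmul]
  refine Finset.sum_congr rfl fun α _ => Finset.sum_congr rfl fun β _ => ?_
  simp only [Matrix.mul_apply, Finset.sum_smul, mul_smul]
  rw [Finset.sum_comm]
  simp only [← Finset.smul_sum, ← sum_path_eq_sum_list_prod]
  refine Finset.sum_congr rfl fun γ _ => ?_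
  simp only [ite_and, Finset.smul_sum]
  split_ifs
  · refine Finset.sum_congr rfl fun δ _ => ?_
    simp only [eq_comm (a := δ 0), Finset.prod_mul_distrib, mul_smul, smul_ite, smul_zero]
    rfl
  · simp
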